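/- Let k be a field of characteristic ≠ 2 and n ≥ 1. Then the tame subgroup T_n(k) of GA_n(k) is contained in GLIN_n(k), the subgroup generated by the linearizable automorphisms. -/

import Mathlib

open MvPolynomial

/-- An automorphism of `k[X_1,…,X_n]` is linear if it maps every variable to a homogeneous
polynomial of degree 1. -/
def IsLinearAut (k : Type*) [Field k] (n : ℕ)
    (φ : MvPolynomial (Fin n) k ≃ₐ[k] MvPolynomial (Fin n) k) : Prop :=
  ∀ i, (φ (X i)).IsHomogeneous 1

/-- An automorphism is affine if it maps every variable to a polynomial of degree `≤ 1`. -/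
def IsAffineAut (k : Type*) [Field k] (n : ℕ)
    (φ : MvPolynomial (Fin n) k ≃ₐ[k] MvPolynomial (Fin n) k) : Prop :=
  ∀ i, (φ (X i)).totalDegree ≤ 1

/-- An automorphism is elementary if it has the form `X_i ↦ X_i + f` with `f` not involving
`X_i`, fixing all other variables. -/
def IsElementaryAut (k : Type*) [Field k] (n : ℕ)
    (φ : MvPolynomial (Fin n) k ≃ₐ[k] MvPolynomial (Fin n) k) : Prop :=
  ∃ (i : Fin n) (f : MvPolynomial (Fin n) k),
    f ∈ MvPolynomial.supported k {j : Fin n | j ≠ i} ∧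
    φ (X i) = X i + f ∧ ∀ j, j ≠ i → φ (X j) = X j

/-- An automorphism is linearizable if it is conjugate in the automorphism group to a
linear automorphism. -/
def IsLinearizableAut (k : Type*) [Field k] (n : ℕ)
    (φ : MvPolynomial (Fin n) k ≃ₐ[k] MvPolynomial (Fin n) k) : Prop :=
  ∃ (σ M : MvPolynomial (Fin n) k ≃ₐ[k] MvPolynomial (Fin n) k),
    IsLinearAut k n M ∧ ∀ p, φ p = σ (M (σ.symm p))

/-- `T_n(k)`: the tame subgroup of `GA_n(k)`, generated by affine and elementary
automorphisms. -/
noncomputable def TameSubgroup (k : Type*) [Field k] (n : ℕ) :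
    Subgroup (MvPolynomial (Fin n) k ≃ₐ[k] MvPolynomial (Fin n) k) :=
  Subgroup.closure {φ | IsAffineAut k n φ ∨ IsElementaryAut k n φ}

/-- `GLIN_n(k)`: the subgroup of `GA_n(k)` generated by the linearizable automorphisms. -/
noncomputable def GLIN (k : Type*) [Field k] (n : ℕ) :
    Subgroup (MvPolynomial (Fin n) k ≃ₐ[k] MvPolynomial (Fin n) k) :=
  Subgroup.closure {φ | IsLinearizableAut k n φ}

lemma aux_fix {k : Type*} [Field k] {n : ℕ} (S : Set (Fin n))
    (g : MvPolynomial (Fin n) k →ₐ[k] MvPolynomial (Fin n) k)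
    (hg : ∀ j, j ∉ S → g (X j) = X j) (p : MvPolynomial (Fin n) k)
    (hp : p ∈ MvPolynomial.supported k Sᶜ) : g p = p := by
  have h : MvPolynomial.supported k Sᶜ ≤ AlgHom.equalizer g (AlgHom.id k _) := by
    rw [MvPolynomial.supported_eq_adjoin_X, Algebra.adjoin_le_iff]
    rintro _ ⟨j, hj, rfl⟩
    exact hg j hj
  exact h hp

lemma aux_exists {k : Type*} [Field k] {n : ℕ} (S : Set (Fin n))
    (f : Fin n → MvPolynomial (Fin n) k)
    (hf : ∀ j, f j ∈ MvPolynomial.supported k Sᶜ) (hf0 : ∀ j, j ∉ S → f j = 0) :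
    ∃ e : MvPolynomial (Fin n) k ≃ₐ[k] MvPolynomial (Fin n) k,
      (∀ j, e (X j) = X j + f j) ∧ (∀ j, e.symm (X j) = X j - f j) := by
  have h1 : ∀ j, aeval (R := k) (fun j => X j + f j) (f j) = f j := fun j =>
    aux_fix S _ (fun i hi => by simp [hf0 i hi]) _ (hf j)
  have h2 : ∀ j, aeval (R := k) (fun j => X j - f j) (f j) = f j := fun j =>
    aux_fix S _ (fun i hi => by simp [hf0 i hi]) _ (hf j)
  refine ⟨AlgEquiv.ofAlgHom (aeval (fun j => X j + f j)) (aeval (fun j => X j - f j)) ?_ ?_,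
    fun j => ?_, fun j => ?_⟩
  · ext1 j
    simp only [AlgHom.comp_apply, aeval_X, map_sub, map_add, h1, AlgHom.id_apply]
    ring
  · ext1 j
    simp only [AlgHom.comp_apply, aeval_X, map_sub, map_add, h2, AlgHom.id_apply]
    ring
  · simp
  · simp [AlgEquiv.ofAlgHom]

open Classical in
lemma aux_neg (k : Type*) [Field k] {n : ℕ} (S : Set (Fin n)) :
    ∃ e : MvPolynomial (Fin n) k ≃ₐ[k] MvPolynomial (Fin n) k,
      ∀ j, e (X j) = if j ∈ S then - X j else X j := by
  refine ⟨AlgEquiv.ofAlgHom (aeval (fun j => if j ∈ S then - X j else X j))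
    (aeval (fun j => if j ∈ S then - X j else X j)) ?_ ?_, fun j => ?_⟩
  · ext1 j
    by_cases h : j ∈ S <;> simp [h]
  · ext1 j
    by_cases h : j ∈ S <;> simp [h]
  · simp

lemma aux_linear {k : Type*} [Field k] {n : ℕ}
    (M : MvPolynomial (Fin n) k ≃ₐ[k] MvPolynomial (Fin n) k) (hM : IsLinearAut k n M) :
    M ∈ GLIN k n :=
  Subgroup.subset_closure ⟨1, M, hM, fun _ => rfl⟩

lemma aux_main {k : Type*} [Field k] (h2 : (2 : k) ≠ 0) {n : ℕ} (S : Set (Fin n))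
    (f : Fin n → MvPolynomial (Fin n) k)
    (hf : ∀ j, f j ∈ MvPolynomial.supported k Sᶜ) (hf0 : ∀ j, j ∉ S → f j = 0)
    (e : MvPolynomial (Fin n) k ≃ₐ[k] MvPolynomial (Fin n) k)
    (he : ∀ j, e (X j) = X j + f j) : e ∈ GLIN k n := by
  obtain ⟨H, hH, hH'⟩ := aux_exists S (fun j => (2⁻¹ : k) • f j)
    (fun j => Subalgebra.smul_mem _ (hf j) _) (fun j hj => by simp [hf0 j hj])
  obtain ⟨t, ht⟩ := aux_neg k S
  have htl : IsLinearAut k n t := by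
    intro j
    rw [ht]
    split_ifs
    · exact (isHomogeneous_X k j).neg
    · exact isHomogeneous_X k j
  have hHf : ∀ j, H (f j) = f j := fun j =>
    aux_fix S H.toAlgHom (fun i hi => by simp [hH, hf0 i hi]) _ (hf j)
  have htf : ∀ j, t (f j) = f j := fun j =>
    aux_fix S t.toAlgHom (fun i hi => by simp [ht, hi]) _ (hf j)
  have hconj : H * t * H⁻¹ ∈ GLIN k n :=
    Subgroup.subset_closure ⟨H, t, htl, fun _ => rfl⟩
  have key : e = H * t * H⁻¹ * t := by
    apply AlgEquiv.coe_toAlgHom_injective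
    ext1 j
    change e (X j) = H (t (H.symm (t (X j))))
    rw [ht, he]
    split_ifs with h
    · have h22 : (2⁻¹ : k) + 2⁻¹ = 1 := by field_simp; norm_num
      have : (2⁻¹ : k) • f j + (2⁻¹ : k) • f j = f j := by rw [← add_smul, h22, one_smul]
      simp only [map_neg, hH', map_sub, map_smul, ht, if_pos h, htf, hHf, hH]
      linear_combination -this
    · rw [hH', hf0 j h]
      simp [ht, h, hH, hf0 j h]
  rw [key]
  exact mul_mem hconj (aux_linear t htl)

lemma aux_deg {k : Type*} [Field k] {n : ℕ} (p : MvPolynomial (Fin n) k)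
    (hp : p.totalDegree ≤ 1) : (p - C (constantCoeff p)).IsHomogeneous 1 := by
  have h : p - C (constantCoeff p) = homogeneousComponent 1 p := by
    have h1 := sum_homogeneousComponent p
    have h3 : ∑ i ∈ Finset.range 2, homogeneousComponent i p = p := by
      rw [← Finset.sum_subset (Finset.range_mono (Nat.succ_le_succ hp)), h1]
      intro i _ hi
      exact homogeneousComponent_eq_zero _ _ (by simpa using hi)
    rw [Finset.sum_range_succ, Finset.sum_range_one, homogeneousComponent_zero] at h3
    rw [sub_eq_iff_eq_add, add_comm]
    exact h3.symm
  rw [h]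
  exact homogeneousComponent_isHomogeneous 1 p

/-- Over a field of characteristic `≠ 2`, the tame subgroup `T_n(k)` is contained in
`GLIN_n(k)`. -/
theorem nagata_stmt_17 (k : Type*) [Field k] (h2 : (2 : k) ≠ 0) (n : ℕ) (hn : 1 ≤ n) :
    TameSubgroup k n ≤ GLIN k n := by
  unfold TameSubgroup
  rw [Subgroup.closure_le]
  rintro φ (hφ | ⟨i, f, hf, hi, hj⟩)
  · have hs : ∀ j : Fin n, (C (constantCoeff (φ (X j))) : MvPolynomial (Fin n) k) ∈
        MvPolynomial.supported k (Set.univ : Set (Fin n))ᶜ := fun j =>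
      Subalgebra.algebraMap_mem _ _
    obtain ⟨T, hT, hT'⟩ := aux_exists Set.univ (fun j => C (constantCoeff (φ (X j)))) hs
      (fun j hj => absurd (Set.mem_univ j) hj)
    have hTG : T ∈ GLIN k n := aux_main h2 Set.univ _ hs
      (fun j hj => absurd (Set.mem_univ j) hj) T hT
    have hM : IsLinearAut k n (φ * T⁻¹) := by
      intro j
      change (φ (T.symm (X j))).IsHomogeneous 1
      have hC : φ (C (constantCoeff (φ (X j)))) = C (constantCoeff (φ (X j))) :=
        φ.commutes _
      rw [hT', map_sub, hC]
      exact aux_deg _ (hφ j)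
    have := mul_mem (aux_linear _ hM) hTG
    simpa using this
  · classical
    have hS : ({i} : Set (Fin n))ᶜ = {j | j ≠ i} := rfl
    refine aux_main h2 {i} (fun j => if j = i then f else 0) (fun j => ?_) (fun j h => ?_) φ
      (fun j => ?_)
    · rw [hS]
      split_ifs
      · exact hf
      · exact zero_mem _
    · exact if_neg h
    · by_cases h : j = i
      · subst h
        simp [hi]
      · simp [h, hj j h]
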